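/- Let F be a free group (on an arbitrary set of generators) and let A be any ℤ[F]-module. Then the group cohomology Hⁿ(F;A) vanishes for every n ≥ 2. -/

import Mathlib

open CategoryTheory Limits

/-- There is a 1-cocycle on a free group with any prescribed values on the generators. -/
theorem exists_cocycle_of_gens {α : Type} (B : Rep.{0} ℤ (FreeGroup α)) (b : α → B) :
    ∃ c : groupCohomology.cocycles₁ B, ∀ x, c (FreeGroup.of x) = b x := by
  let T : α → Equiv.Perm B := fun x =>
    { toFun := fun v => B.ρ (FreeGroup.of x) v + b x
      invFun := fun v => B.ρ (FreeGroup.of x)⁻¹ (v - b x)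
      left_inv := fun v => by simp
      right_inv := fun v => by simp }
  let Φ : FreeGroup α →* Equiv.Perm B := FreeGroup.lift T
  have hof : ∀ x v, Φ (FreeGroup.of x) v = B.ρ (FreeGroup.of x) v + b x := by
    intro x v
    simp only [Φ, FreeGroup.lift_apply_of]
    rfl
  have key : ∀ g v, Φ g v = B.ρ g v + Φ g 0 := by
    intro g
    induction g using FreeGroup.induction_on with
    | C1 => intro v; simp
    | of x => intro v; simp [hof]
    | inv_of x ih =>
      intro v
      apply (Φ (FreeGroup.of x)).injective
      have e : ∀ w, Φ (FreeGroup.of x) (Φ (FreeGroup.of x)⁻¹ w) = w := by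
        intro w
        rw [← Equiv.Perm.mul_apply, ← map_mul]
        simp
      rw [e, hof x (_ + _), map_add, add_assoc, ← hof, e]
      simp
    | mul g h ihg ihh =>
      intro v
      rw [map_mul, Equiv.Perm.mul_apply, Equiv.Perm.mul_apply, ihg, ihh, ihg (Φ h 0)]
      simp [add_assoc]
  refine ⟨⟨fun g => Φ g 0, ?_⟩, fun x => ?_⟩
  · rw [groupCohomology.mem_cocycles₁_iff]
    intro g h
    rw [map_mul, Equiv.Perm.mul_apply, key]
  · change Φ (FreeGroup.of x) 0 = b x
    simp [hof]

/-- A 1-cocycle on a free group is determined by its values on the generators. -/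
theorem cocycle_ext_gens {α : Type} (B : Rep.{0} ℤ (FreeGroup α))
    (c d : groupCohomology.cocycles₁ B)
    (h : ∀ x, c (FreeGroup.of x) = d (FreeGroup.of x)) : c = d := by
  apply groupCohomology.cocycles₁_ext
  intro g
  have hc := (groupCohomology.mem_cocycles₁_iff (A := B) c).1 c.2
  have hd := (groupCohomology.mem_cocycles₁_iff (A := B) d).1 d.2
  induction g using FreeGroup.induction_on with
  | C1 => simp
  | of x => exact h x
  | inv_of x ih =>
    have h1 := hc (FreeGroup.of x)⁻¹ (FreeGroup.of x)
    have h2 := hd (FreeGroup.of x)⁻¹ (FreeGroup.of x)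
    rw [inv_mul_cancel, groupCohomology.cocycles₁_map_one] at h1 h2
    rw [ih] at h1
    exact add_left_cancel (h1.symm.trans h2)
  | mul g h ihg ihh => rw [hc, hd, ihg, ihh]

/-- `H¹` of a free group preserves epimorphisms. -/
theorem epi_map_one {α : Type} {B Q : Rep.{0} ℤ (FreeGroup α)} (φ : B ⟶ Q) [Epi φ] :
    Function.Surjective (groupCohomology.map (MonoidHom.id (FreeGroup α)) φ 1) := by
  intro y
  induction y using groupCohomology.H1_induction_on with
  | h c =>
  choose s hs using (Rep.epi_iff_surjective φ).1 inferInstance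
  obtain ⟨c', hc'⟩ := exists_cocycle_of_gens B (fun x => s (c (FreeGroup.of x)))
  refine ⟨groupCohomology.H1π B c', ?_⟩
  rw [groupCohomology.H1π_comp_map_apply]
  congr 1
  apply cocycle_ext_gens
  intro x
  rw [groupCohomology.coe_mapCocycles₁]
  change φ.hom (c' (FreeGroup.of x)) = _
  rw [hc', hs]

/-- The coinduced module containing `A`. -/
noncomputable abbrev bigCoind {α : Type} (A : Rep.{0} ℤ (FreeGroup α)) : Rep.{0} ℤ (FreeGroup α) :=
  Rep.coind (⊥ : Subgroup (FreeGroup α)).subtype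
    (Rep.res (⊥ : Subgroup (FreeGroup α)).subtype A)

theorem isZero_bigCoind {α : Type} (A : Rep.{0} ℤ (FreeGroup α)) (n : ℕ) :
    IsZero (groupCohomology (bigCoind A) (n + 1)) :=
  (isZero_groupCohomology_succ_of_subsingleton _ n).of_iso (groupCohomology.coindIso _ (n + 1))

noncomputable abbrev bigEmb {α : Type} (A : Rep.{0} ℤ (FreeGroup α)) : A ⟶ bigCoind A :=
  Rep.resCoindToHom _ A _ (𝟙 _)

theorem mono_bigEmb {α : Type} (A : Rep.{0} ℤ (FreeGroup α)) : Mono (bigEmb A) := by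
  rw [Rep.mono_iff_injective]
  intro a b hab
  have := congrFun (congrArg Subtype.val hab) 1
  change A.ρ 1 a = A.ρ 1 b at this
  simpa using this

theorem isZero_free {α : Type} (n : ℕ) : ∀ A : Rep.{0} ℤ (FreeGroup α),
    IsZero (groupCohomology A (n + 2)) := by
  induction n with
  | zero =>
    intro A
    have := mono_bigEmb A
    let X := ShortComplex.mk (bigEmb A) (cokernel.π (bigEmb A)) (cokernel.condition _)
    have hX : X.ShortExact :=
      { exact := ShortComplex.exact_cokernel _
        mono_f := this
        epi_g := inferInstanceAs (Epi (cokernel.π _)) }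
    have hepi := groupCohomology.epi_δ_of_isZero hX 1 (isZero_bigCoind A 1)
    have hmap : Epi (groupCohomology.map (A := X.X₂) (B := X.X₃) (MonoidHom.id (FreeGroup α)) X.g 1) := by
      have := hX.epi_g
      exact (ModuleCat.epi_iff_surjective _).2 (epi_map_one X.g)
    have h0 : IsZero (groupCohomology X.X₃ 1) := by
      rw [IsZero.iff_id_eq_zero, ← cancel_epi (groupCohomology.map (A := X.X₂) (B := X.X₃) (MonoidHom.id (FreeGroup α)) X.g 1)]
      exact (isZero_bigCoind A 0).eq_of_src _ _
    exact IsZero.of_epi (groupCohomology.δ hX 1 2 rfl) h0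
  | succ n ih =>
    intro A
    have := mono_bigEmb A
    let X := ShortComplex.mk (bigEmb A) (cokernel.π (bigEmb A)) (cokernel.condition _)
    have hX : X.ShortExact :=
      { exact := ShortComplex.exact_cokernel _
        mono_f := this
        epi_g := inferInstanceAs (Epi (cokernel.π _)) }
    have hepi := groupCohomology.epi_δ_of_isZero hX (n + 2) (isZero_bigCoind A (n + 2))
    exact IsZero.of_epi (groupCohomology.δ hX (n + 2) (n + 3) rfl) (ih X.X₃)

/-- Let `F` be a free group (on an arbitrary set of generators) and let `A`
be any `ℤ[F]`-module (i.e. a representation of `F` over `ℤ`). Then the group cohomology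
`Hⁿ(F;A)` vanishes for every `n ≥ 2`. -/
theorem stmt_8 (α : Type) (A : Rep ℤ (FreeGroup α)) (n : ℕ) (hn : 2 ≤ n) :
    Subsingleton (groupCohomology A n) := by
  obtain ⟨m, rfl⟩ := Nat.exists_eq_add_of_le' hn
  exact ModuleCat.subsingleton_of_isZero (isZero_free m A)
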